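/- Let X be the punctured Möbius band with boundary circles C₁ and C₂. Suppose f : X → X is a boundary-preserving map with f(C₁) ⊆ C₁ such that the restriction, viewed as a map f|C₁ : C₁ → C₁, is essential, while the restriction f|C₂ : C₂ → ∂X is inessential. Then f is boundary-homotopic to a map g : X → X having no fixed points in X ∖ ∂X, i.e., every fixed point of g lies in ∂X. -/

import Mathlib

open Set

namespace PMB

/-- The square [0,1] × [−1,1] as a subspace of ℝ². -/
def Sq : Set (ℝ × ℝ) := Set.Icc 0 1 ×ˢ Set.Icc (-1) 1

/-- The identification (0,y) ∼ (1,−y) on the square. -/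
def rel (p q : Sq) : Prop :=
  (p : ℝ × ℝ) = (q : ℝ × ℝ) ∨
  ((p : ℝ × ℝ).1 = 0 ∧ (q : ℝ × ℝ).1 = 1 ∧ (p : ℝ × ℝ).2 = -(q : ℝ × ℝ).2) ∨
  ((p : ℝ × ℝ).1 = 1 ∧ (q : ℝ × ℝ).1 = 0 ∧ (q : ℝ × ℝ).2 = -(p : ℝ × ℝ).2)

/-- The Möbius band: the quotient of the square by the identification. -/
def M := Quot rel

instance : TopologicalSpace M := inferInstanceAs (TopologicalSpace (Quot rel))

/-- The quotient map. -/
def qm : Sq → M := Quot.mk rel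

/-- The open disc of radius 1/4 centred at (1/2, 0). -/
def Bdisc : Set (ℝ × ℝ) := Metric.ball (1/2, 0) (1/4)

/-- The circle of radius 1/4 centred at (1/2, 0). -/
def Scirc : Set (ℝ × ℝ) := Metric.sphere (1/2, 0) (1/4)

/-- The punctured Möbius band, as a subset of the Möbius band. -/
def Xset : Set M := {m | m ∉ qm '' {p : Sq | (p : ℝ × ℝ) ∈ Bdisc}}

/-- The punctured Möbius band as a topological space. -/
abbrev X : Type := ↥Xset

/-- The boundary circle of the Möbius band. -/
def C1 : Set X := {x | ∃ p : Sq, qm p = (x : M) ∧ ((p : ℝ × ℝ).2 = 1 ∨ (p : ℝ × ℝ).2 = -1)}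

/-- The boundary circle coming from the removed disc. -/
def C2 : Set X := {x | ∃ p : Sq, qm p = (x : M) ∧ (p : ℝ × ℝ) ∈ Scirc}

/-- The boundary of the punctured Möbius band. -/
def Bd : Set X := C1 ∪ C2

/-- A self-map of the punctured Möbius band is boundary-preserving if it sends ∂X into ∂X. -/
def BoundaryPreserving (f : C(X, X)) : Prop := MapsTo f Bd Bd

/-- Two self-maps are boundary-homotopic if there is a homotopy between them keeping
∂X inside ∂X at all times. -/
def BoundaryHomotopic (f g : C(X, X)) : Prop :=
  ∃ H : ContinuousMap.Homotopy f g, ∀ x : X, x ∈ Bd → ∀ t : unitInterval, H (t, x) ∈ Bd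

/-- A continuous map is inessential if it is homotopic to a constant map. -/
def Inessential {α β : Type*} [TopologicalSpace α] [TopologicalSpace β] (f : C(α, β)) : Prop :=
  ∃ b : β, ContinuousMap.Homotopic f (ContinuousMap.const α b)

/-- A continuous map is essential if it is not homotopic to a constant map. -/
def Essential {α β : Type*} [TopologicalSpace α] [TopologicalSpace β] (f : C(α, β)) : Prop :=
  ¬ Inessential f

/-- The restriction of a self-map of X to a subset `s` mapped into a subset `t`,
as a continuous map between the subspaces. -/
def restrictMap (f : C(X, X)) {s t : Set X} (h : MapsTo f s t) : C(s, t) :=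
  ⟨fun x => ⟨f x, h x.2⟩, Continuous.subtype_mk (f.continuous.comp continuous_subtype_val) _⟩

/-!
Filling in the puncture turns `toSpine ∘ f`, which is null-homotopic on `C2`, into a map `h` of the
Möbius band to the spine of `X`, a graph with two vertices and three edges which contains `C1` as
the complement of an edge. Consider the covering of the spine in which this complement lifts to one
sheet, and lift `h` along the fibres of the band, beginning on `C1` in that sheet. If the far ends
of the fibres lie in another sheet, then contracting the other branches of the covering to vertices
shows that `f` is inessential on `C1`. Otherwise `h` itself lifts, and as the covering deforms onto
the distinguished sheet, the map `toSpine ∘ f` can be swept into `C1`.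

A homotopy `L` from `f` into `C1` can be arranged to keep `L (t, x)` at radius more than `t` from
the puncture for `0 < t < 1`. Stopping `L` at the time `t = radius x` then removes all fixed points
off the boundary.
-/
open scoped unitInterval Topology

section Dipole

/-! ### Dipole graphs -/

variable {ι : Type*} [DecidableEq ι]

/-- The dipole graph: two vertices joined by one edge for each label in `ι`. The first coordinate
is the position along the edge; the point at position `t` of edge `l` has `t * (1 - t)` as its only
other nonzero coordinate, so that the edges meet exactly at the two vertices. -/
abbrev Dipole (ι : Type*) [DecidableEq ι] : Type _ :=
  {z : I × (ι → ℝ) // ∃ l, z.2 = Pi.single l ((z.1 : ℝ) * (1 - z.1))}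

namespace Dipole

lemma ext {z w : Dipole ι} (h : (z.1.1 : ℝ) = w.1.1) (h' : ∀ i, z.1.2 i = w.1.2 i) : z = w :=
  Subtype.ext (Prod.ext (Subtype.ext h) (funext h'))

/-- The two vertices of the dipole graph, `false` at position `0` and `true` at position `1`. -/
def vertex [Nonempty ι] (τ : Bool) : Dipole ι :=
  ⟨(bif τ then 1 else 0, 0), Classical.arbitrary ι, by cases τ <;> simp⟩

/-- The edge with label `l`, run through from the vertex `τ` to the other one. -/
def edge [Nonempty ι] (τ : Bool) (l : ι) : Path (vertex τ : Dipole ι) (vertex !τ) where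
  toFun t := ⟨(bif τ then σ t else t, Pi.single l ((t : ℝ) * (1 - t))), l, by
    cases τ <;> simp [mul_comm]⟩
  continuous_toFun := by
    have : Continuous fun t : I ↦ (Pi.single l ((t : ℝ) * (1 - t)) : ι → ℝ) :=
      (continuous_single l).comp (by fun_prop)
    refine Continuous.subtype_mk (Continuous.prodMk ?_ this) _
    cases τ
    exacts [continuous_id, unitInterval.continuous_symm]
  source' := by cases τ <;> simp [vertex]
  target' := by cases τ <;> simp [vertex]

/-- The distance from the vertex `τ`, measured along an edge. -/
def pos (τ : Bool) (z : Dipole ι) : I := bif τ then σ z.1.1 else z.1.1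

lemma continuous_pos (τ : Bool) : Continuous (pos τ : Dipole ι → I) := by
  have h : Continuous fun z : Dipole ι ↦ z.1.1 := by fun_prop
  cases τ
  exacts [h, unitInterval.continuous_symm.comp h]

lemma pos_not (τ : Bool) (z : Dipole ι) : pos (!τ) z = σ (pos τ z) := by
  cases τ <;> simp [pos]

/-- A label of an edge through the point `z`; it is unique unless `z` is a vertex. -/
noncomputable def label (z : Dipole ι) : ι := z.2.choose

lemma snd_eq_single_label (z : Dipole ι) :
    z.1.2 = Pi.single (label z) ((z.1.1 : ℝ) * (1 - z.1.1)) := z.2.choose_spec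

lemma label_eq_of_apply_ne_zero {z : Dipole ι} {l : ι} (h : z.1.2 l ≠ 0) : label z = l := by
  by_contra hl
  exact h (by rw [snd_eq_single_label, Pi.single_eq_of_ne (Ne.symm hl)])

lemma apply_label_ne_zero {τ : Bool} {z : Dipole ι} (h0 : pos τ z ≠ 0) (h1 : pos τ z ≠ 1) :
    z.1.2 (label z) ≠ 0 := by
  rw [snd_eq_single_label z, Pi.single_eq_same, mul_ne_zero_iff, sub_ne_zero]
  cases τ <;> simp_all [pos, eq_comm (a := (1 : ℝ))]

lemma eventually_label_eq {τ : Bool} {z : Dipole ι} (h0 : pos τ z ≠ 0) (h1 : pos τ z ≠ 1) :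
    ∀ᶠ z' in 𝓝 z, label z' = label z := by
  have hc : Continuous fun z' : Dipole ι ↦ z'.1.2 (label z) := by fun_prop
  filter_upwards [hc.continuousAt.eventually_ne (apply_label_ne_zero h0 h1)] with z' hz'
  exact label_eq_of_apply_ne_zero hz'

variable [Nonempty ι]

@[simp] lemma pos_edge (τ : Bool) (l : ι) (t : I) : pos τ (edge τ l t) = t := by
  cases τ <;> simp [pos, edge]

lemma edge_not (τ : Bool) (l : ι) (t : I) : edge (!τ) l t = edge τ l (σ t) := by
  cases τ <;> simp [edge, mul_comm]

lemma edge_label_pos (τ : Bool) (z : Dipole ι) : edge τ (label z) (pos τ z) = z := by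
  have h := snd_eq_single_label z
  refine Subtype.ext (Prod.ext ?_ ?_) <;> cases τ <;> simp [edge, pos, h, mul_comm]

/-- The points of the edge with label `l`, including both vertices. -/
def closedEdge (l : ι) : Set (Dipole ι) := {z | edge false l (pos false z) = z}

lemma isClosed_closedEdge (l : ι) : IsClosed (closedEdge l) :=
  isClosed_eq ((edge false l).continuous.comp (continuous_pos false)) continuous_id

lemma mem_closedEdge_label (z : Dipole ι) : z ∈ closedEdge (label z) := edge_label_pos false z

lemma edge_mem_closedEdge (l : ι) (t : I) : edge false l t ∈ closedEdge l := by
  simp [closedEdge]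

lemma eq_vertex_of_pos_eq_zero {τ : Bool} {z : Dipole ι} (h : pos τ z = 0) : z = vertex τ := by
  rw [← edge_label_pos τ z, h, Path.source]

lemma eq_or_pos_of_mem_closedEdge {l m : ι} {z : Dipole ι} (hl : z ∈ closedEdge l)
    (hm : z ∈ closedEdge m) (τ : Bool) : l = m ∨ pos τ z = 0 ∨ pos τ z = 1 := by
  by_contra! h
  have key {k : ι} (hk : z ∈ closedEdge k) : k = label z := by
    by_contra hne
    refine apply_label_ne_zero h.2.1 h.2.2 ?_
    rw [← show edge false k (pos false z) = z from hk]
    exact Pi.single_eq_of_ne (Ne.symm (by rwa [show edge false k (pos false z) = z from hk])) _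
  exact h.1 ((key hl).trans (key hm).symm)

lemma continuous_label [Finite ι] {A Y : Type*} [TopologicalSpace A] [TopologicalSpace Y]
    {π : A → Dipole ι} (hπ : Continuous π) {φ : ι → A → Y} (hφ : ∀ l, Continuous (φ l))
    (h : ∀ a l m, π a ∈ closedEdge l → π a ∈ closedEdge m → φ l a = φ m a) :
    Continuous fun a ↦ φ (label (π a)) a := by
  refine (locallyFinite_of_finite fun l ↦ π ⁻¹' closedEdge l).continuous
    (iUnion_eq_univ_iff.2 fun a ↦ ⟨_, mem_closedEdge_label (π a)⟩)
    (fun l ↦ (isClosed_closedEdge l).preimage hπ) fun l ↦ ?_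
  exact (hφ l).continuousOn.congr fun a ha ↦ h a _ l (mem_closedEdge_label _) ha

/-- The map out of a dipole graph that runs along the path `γ l` on the edge with label `l`. -/
noncomputable def desc [Finite ι] {Y : Type*} [TopologicalSpace Y] {a b : Y}
    (γ : ι → Path a b) : C(Dipole ι, Y) where
  toFun z := γ (label z) (pos false z)
  continuous_toFun := by
    refine continuous_label (φ := fun l z ↦ γ l (pos false z)) continuous_id
      (fun l ↦ (γ l).continuous.comp (continuous_pos false)) fun z l m hl hm ↦ ?_
    obtain rfl | h | h := eq_or_pos_of_mem_closedEdge hl hm false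
    · rfl
    all_goals simp [show pos false z = _ from h]

lemma desc_edge [Finite ι] {Y : Type*} [TopologicalSpace Y] {a b : Y} (γ : ι → Path a b)
    (l : ι) (t : I) : desc γ (edge false l t) = γ l t := by
  change γ (label (edge false l t)) (pos false (edge false l t)) = γ l t
  obtain h | h | h := eq_or_pos_of_mem_closedEdge (mem_closedEdge_label (edge false l t))
    (edge_mem_closedEdge l t) false
  · rw [h, pos_edge]
  all_goals rw [h, show t = _ by simpa only [pos_edge] using h]; simp

end Dipole

end Dipole

section Cover

/-! ### The covering of a dipole graph attached to the complement of an edge -/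

variable {ι : Type*} [DecidableEq ι]

/-- Reduced words in the edges of a dipole graph whose last letter, if any, is `e`. Read from right
to left, they are the edge paths without backtracking that start in the complement of `e` by
crossing `e`; consecutive edges share a vertex, so only their labels are recorded. -/
def ReducedWord (e : ι) : Type _ :=
  {w : List ι // w.IsChain (· ≠ ·) ∧ ∀ l ∈ w.getLast?, l = e}

namespace ReducedWord

variable {e : ι}

instance : TopologicalSpace (ReducedWord e) := ⊥

instance : DiscreteTopology (ReducedWord e) := ⟨rfl⟩

/-- The empty word. -/
def nil : ReducedWord e := ⟨[], by simp⟩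

/-- Crossing the edge `l` and reducing. From the empty word this has no effect unless `l = e`,
because the paths are taken modulo their part inside the complement of `e`. -/
def toggle (l : ι) : ReducedWord e → ReducedWord e
  | ⟨[], _⟩ => if l = e then ⟨[e], by simp⟩ else nil
  | ⟨a :: w, hw⟩ =>
    if h : a = l then ⟨w, hw.1.tail, fun b hb ↦ hw.2 b (by cases w <;> simp_all)⟩
    else ⟨l :: a :: w, by simp [hw.1, Ne.symm h], by simpa using hw.2⟩

lemma toggle_toggle (l : ι) (w : ReducedWord e) : toggle l (toggle l w) = w := by
  rcases w with ⟨_ | ⟨a, _ | ⟨b, w⟩⟩, hw⟩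
  · by_cases h : l = e <;> simp [toggle, nil, h] <;> rfl
  · obtain rfl : a = e := by simpa using hw
    by_cases h : a = l <;> simp [toggle, h] <;> rfl
  · have hab : a ≠ b := (List.isChain_cons_cons.1 hw.1).1
    by_cases h : a = l
    · subst h
      simp [toggle, hab.symm]
      rfl
    · simp [toggle, h]
      rfl

end ReducedWord

namespace Dipole

/-- The covering space of the dipole graph with fibre `ReducedWord e`: crossing the middle of the
edge `l` changes the sheet by `ReducedWord.toggle l`. The complement of `e` lifts to the sheet of
the empty word. -/
noncomputable def coverCore (e : ι) : FiberBundleCore Bool (Dipole ι) (ReducedWord e) where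
  baseSet τ := {z | pos τ z ≠ 1}
  isOpen_baseSet τ := isOpen_ne_fun (continuous_pos τ) continuous_const
  indexAt z := if pos false z = 1 then true else false
  mem_baseSet_at z := by
    split_ifs with h
    · simp [← Bool.not_false, pos_not, h]
    · exact h
  coordChange τ τ' z w := if τ = τ' then w else w.toggle (label z)
  coordChange_self τ z _ w := if_pos rfl
  continuousOn_coordChange τ τ' := by
    by_cases hτ : τ = τ'
    · simpa only [hτ, if_true] using continuousOn_snd
    obtain rfl : τ' = !τ := Bool.eq_not.2 (Ne.symm hτ)
    simp only [hτ, if_false]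
    rw [continuousOn_prod_of_discrete_right]
    rintro w z ⟨⟨h1, h0⟩, -⟩
    have h0 : pos τ z ≠ 0 := fun h ↦ h0 (by simp [pos_not, h])
    exact (continuousAt_const.congr ((eventually_label_eq h0 h1).mono fun z' hz' ↦
      congrArg w.toggle hz'.symm)).continuousWithinAt
  coordChange_comp τ₁ τ₂ τ₃ z _ w := by
    cases τ₁ <;> cases τ₂ <;> cases τ₃ <;> simp [ReducedWord.toggle_toggle]

/-- The total space of `coverCore`. -/
abbrev Cover (e : ι) : Type _ := (coverCore e).TotalSpace

lemma isCoveringMap_proj (e : ι) : IsCoveringMap (coverCore e).proj :=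
  FiberBundle.isCoveringMap (E := (coverCore e).Fiber)

/-- The complement of the open edge with label `e`. -/
def deleteEdge (e : ι) : Set (Dipole ι) := {z | z.1.2 e = 0}

lemma label_ne_or_pos_of_mem_deleteEdge {e : ι} {z : Dipole ι} (hz : z ∈ deleteEdge e) (τ : Bool) :
    label z ≠ e ∨ pos τ z = 0 ∨ pos τ z = 1 := by
  by_contra! h
  exact apply_label_ne_zero h.2.1 h.2.2 (h.1 ▸ hz)

lemma coordChange_nil {e : ι} {z : Dipole ι} (hz : z ∈ deleteEdge e) {τ τ' : Bool}
    (hτ : pos τ z ≠ 1) (hτ' : pos τ' z ≠ 1) :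
    (coverCore e).coordChange τ τ' z .nil = .nil := by
  change (if τ = τ' then ReducedWord.nil else ReducedWord.nil.toggle (label z)) = _
  split_ifs with h
  · rfl
  obtain rfl : τ' = !τ := Bool.eq_not.2 (Ne.symm h)
  obtain he | h0 | h1 := label_ne_or_pos_of_mem_deleteEdge hz τ
  · exact if_neg he
  · exact (hτ' (by simp [pos_not, h0])).elim
  · exact (hτ h1).elim

/-- The lift of the complement of the edge `e` to the sheet of the empty word. -/
noncomputable def liftDeleteEdge (e : ι) : C(deleteEdge e, Cover e) where
  toFun z := ⟨z, .nil⟩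
  continuous_toFun := by
    refine continuous_iff_continuousAt.2 fun z ↦ ?_
    refine (FiberBundle.continuousAt_totalSpace (ReducedWord e) _).2
      ⟨continuous_subtype_val.continuousAt, ?_⟩
    have hz := (coverCore e).mem_baseSet_at z
    have hopen := (continuous_subtype_val (p := (· ∈ deleteEdge e))).continuousAt.eventually
      (((coverCore e).isOpen_baseSet _).mem_nhds hz)
    refine (continuousAt_const (y := .nil)).congr (hopen.mono fun z' hz' ↦ ?_)
    exact (coordChange_nil z'.2 ((coverCore e).mem_baseSet_at z'.1) hz').symm

section Geodesic

variable [Nonempty ι]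

/-- The edge path of the word `w`, read from right to left at unit speed, ending at the vertex
`τ` at time `w.length`. -/
noncomputable def geodesic : Bool → List ι → ℝ → Dipole ι
  | τ, [], _ => vertex τ
  | τ, l :: w, s =>
    if s ≤ w.length then geodesic (!τ) w s else (edge (!τ) l).extend (s - w.length)

lemma geodesic_of_length_le {τ : Bool} {w : List ι} {s : ℝ} (hs : w.length ≤ s) :
    geodesic τ w s = vertex τ := by
  cases w with
  | nil => rfl
  | cons l w =>
    rw [List.length_cons, Nat.cast_add_one] at hs
    rw [geodesic, if_neg (by linarith), Path.extend_of_one_le _ (by linarith), Bool.not_not]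

lemma geodesic_cons_of_le {τ : Bool} {l : ι} {w : List ι} {s : ℝ} (hs : s ≤ w.length) :
    geodesic τ (l :: w) s = geodesic (!τ) w s := if_pos hs

lemma geodesic_cons_of_ge {τ : Bool} {l : ι} {w : List ι} {s : ℝ} (hs : w.length ≤ s) :
    geodesic τ (l :: w) s = (edge (!τ) l).extend (s - w.length) := by
  rcases hs.eq_or_lt with rfl | hs
  · rw [geodesic_cons_of_le le_rfl, geodesic_of_length_le le_rfl, sub_self, Path.extend_zero]
  · exact if_neg hs.not_ge

lemma continuous_geodesic (τ : Bool) (w : List ι) : Continuous (geodesic τ w) := by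
  induction w generalizing τ with
  | nil => exact continuous_const
  | cons l w ih =>
    refine Continuous.if_le (ih _) ((edge (!τ) l).continuous_extend.comp (by fun_prop))
      continuous_id continuous_const fun s hs ↦ ?_
    rw [← geodesic_cons_of_le hs.le, geodesic_cons_of_ge hs.ge]

lemma geodesic_zero_mem_range_vertex (τ : Bool) (w : List ι) :
    geodesic τ w 0 ∈ range (vertex : Bool → Dipole ι) := by
  induction w generalizing τ with
  | nil => exact ⟨τ, rfl⟩
  | cons l w ih => rw [geodesic_cons_of_le (Nat.cast_nonneg _)]; exact ih _

/-- The contraction of the covering in the sheet of `w` over the chart of the vertex `τ`, at the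
point at distance `x` from `τ` on the edge `l`: at time `s` the edge path ending at this point is
cut off at the proportion `s` of its length. The sheet of the empty word over the edges
other than `e` lies in the lift of the complement of `e` and does not move. -/
noncomputable def contract (e : ι) (τ : Bool) (w : List ι) (l : ι) (s x : I) : Dipole ι :=
  if w.head? = some l then geodesic τ w (s * (w.length - x))
  else if w = [] ∧ l ≠ e then edge τ l x
  else geodesic (!τ) (l :: w) (s * (w.length + x))

lemma continuous_contract (e : ι) (τ : Bool) (w : List ι) (l : ι) :
    Continuous fun p : I × I ↦ contract e τ w l p.1 p.2 := by
  unfold contract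
  split_ifs
  · exact (continuous_geodesic _ _).comp (by fun_prop)
  · exact (edge τ l).continuous.comp continuous_snd
  · exact (continuous_geodesic _ _).comp (by fun_prop)

lemma contract_zero_right (e : ι) (τ : Bool) (w : List ι) (l : ι) (s : I) :
    contract e τ w l s 0 = geodesic τ w (s * w.length) := by
  have h : (s : ℝ) * w.length ≤ w.length := mul_le_of_le_one_left (Nat.cast_nonneg _) s.2.2
  unfold contract
  split_ifs with hw hw'
  · rw [Icc.coe_zero, sub_zero]
  · rw [Path.source, hw'.1, geodesic]
  · rw [Icc.coe_zero, add_zero, geodesic_cons_of_le h, Bool.not_not]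

lemma contract_one_left (e : ι) (τ : Bool) (w : List ι) (l : ι) (x : I) :
    contract e τ w l 1 x = edge τ l x := by
  have h0 := x.2.1
  have h1 := x.2.2
  unfold contract
  rw [Icc.coe_one, one_mul, one_mul]
  split_ifs with hw
  · obtain ⟨w, rfl⟩ := List.head?_eq_some_iff.1 hw
    rw [List.length_cons, Nat.cast_add_one, geodesic_cons_of_ge (by linarith),
      show (w.length + 1 - x - w.length : ℝ) = σ x by rw [unitInterval.coe_symm_eq]; ring,
      Path.extend_extends', edge_not, unitInterval.symm_symm]
  · rfl
  · rw [geodesic_cons_of_ge (by linarith), Bool.not_not, add_sub_cancel_left, Path.extend_extends']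

lemma contract_toggle {e : ι} (τ : Bool) (w : ReducedWord e) (l : ι) (s x : I) :
    contract e (!τ) (w.toggle l).1 l s (σ x) = contract e τ w.1 l s x := by
  rcases w with ⟨_ | ⟨a, w⟩, hw⟩
  · by_cases h : l = e
    · simp [ReducedWord.toggle, contract, h]
    · simp [ReducedWord.toggle, ReducedWord.nil, contract, h, edge_not]
  by_cases h : a = l
  · subst h
    have hhead : w.head? ≠ some a := by
      rcases w with _ | ⟨b, w⟩
      · simp
      · simpa using (List.isChain_cons_cons.1 hw.1).1.symm
    have hlast : ¬(w = [] ∧ a ≠ e) := fun h ↦ h.2 (by simpa [h.1] using hw.2)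
    have hlen : ((w.length : ℝ) + 1 - x) = w.length + (1 - x) := by ring
    simp [ReducedWord.toggle, contract, hhead, hlen, if_neg hlast]
  · have hlen : ((w.length : ℝ) + 1 + 1 - (1 - x)) = w.length + 1 + x := by ring
    simp [ReducedWord.toggle, contract, h, hlen]

lemma contract_zero_left (e : ι) (τ : Bool) (w : List ι) (l : ι) (x : I) :
    contract e τ w l 0 x ∈ range (vertex : Bool → Dipole ι) ∨ w = [] ∧ l ≠ e := by
  unfold contract
  rw [Icc.coe_zero, zero_mul, zero_mul]
  split_ifs with _ hw
  · exact .inl (geodesic_zero_mem_range_vertex _ _)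
  · exact .inr hw
  · exact .inl (geodesic_zero_mem_range_vertex _ _)

lemma contract_coordChange {e : ι} (τ τ' : Bool) (z : Dipole ι) (w : ReducedWord e) (s : I) :
    contract e τ' ((coverCore e).coordChange τ τ' z w).1 (label z) s (pos τ' z) =
      contract e τ w.1 (label z) s (pos τ z) := by
  change contract e τ' (if τ = τ' then w else w.toggle (label z)).1 _ _ _ = _
  split_ifs with h
  · rw [h]
  · obtain rfl : τ' = !τ := Bool.eq_not.2 (Ne.symm h)
    rw [pos_not, contract_toggle]

lemma continuousOn_contract_label [Finite ι] (e : ι) (τ : Bool) :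
    ContinuousOn (fun p : (I × Dipole ι) × ReducedWord e ↦
      contract e τ p.2.1 (label p.1.2) p.1.1 (pos τ p.1.2)) {p | pos τ p.1.2 ≠ 1} := by
  refine continuousOn_prod_of_discrete_right.2 fun w ↦ ?_
  rw [continuousOn_iff_continuous_domRestrict]
  refine continuous_label (π := fun a : {a : I × Dipole ι // pos τ a.2 ≠ 1} ↦ a.1.2)
    (φ := fun l a ↦ contract e τ w.1 l a.1.1 (pos τ a.1.2)) (by fun_prop) (fun l ↦ ?_) ?_
  · have := continuous_pos (ι := ι) τ
    exact (continuous_contract e τ w.1 l).comp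
      (by fun_prop : Continuous fun a : {a : I × Dipole ι // pos τ a.2 ≠ 1} ↦
        (a.1.1, pos τ a.1.2))
  · intro a l m hl hm
    obtain rfl | h | h := eq_or_pos_of_mem_closedEdge hl hm τ
    · rfl
    · simp only [h, contract_zero_right]
    · exact (a.2 h).elim

/-- The deformation over the dipole graph of the covering onto the complement of `e`: at time `1`
it is the covering projection, and `liftDeleteEdge e` does not move. -/
noncomputable def deformation [Finite ι] (e : ι) : C(I × Cover e, Dipole ι) where
  toFun p :=
    let τ := (coverCore e).indexAt p.2.proj
    contract e τ p.2.2.1 (label p.2.proj) p.1 (pos τ p.2.proj)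
  continuous_toFun := by
    let chart (τ : Bool) : Set (I × Cover e) := Prod.snd ⁻¹' ((coverCore e).localTriv τ).source
    have hopen (τ : Bool) : IsOpen (chart τ) :=
      ((coverCore e).localTriv τ).open_source.preimage continuous_snd
    refine continuous_of_continuousOn_iUnion_of_isOpen (s := chart) (fun τ ↦ ?_) hopen
      (iUnion_eq_univ_iff.2 fun p ↦ ⟨(coverCore e).indexAt p.2.proj,
        (coverCore e).mem_localTrivAt_source p.2 _ |>.2 ((coverCore e).mem_baseSet_at _)⟩)
    have htriv : ContinuousOn (fun p : I × Cover e ↦ (coverCore e).localTriv τ p.2) (chart τ) :=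
      ((coverCore e).localTriv τ).continuousOn.comp continuousOn_snd fun p hp ↦ hp
    have hcomp := (continuousOn_contract_label e τ).comp (s := chart τ)
      (f := fun p : I × Cover e ↦
        ((p.1, ((coverCore e).localTriv τ p.2).1), ((coverCore e).localTriv τ p.2).2))
      ((continuousOn_fst.prodMk htriv.fst).prodMk htriv.snd)
      fun p hp ↦ ((coverCore e).mem_localTriv_source τ p.2).1 hp
    exact hcomp.congr fun p _ ↦ (contract_coordChange _ τ p.2.proj p.2.2 p.1).symm

lemma vertex_mem_deleteEdge (e : ι) (τ : Bool) : vertex τ ∈ deleteEdge e := rfl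

variable [Finite ι] {e : ι}

lemma deformation_one (a : Cover e) : deformation e (1, a) = a.proj :=
  (contract_one_left ..).trans (edge_label_pos _ _)

lemma deformation_liftDeleteEdge (s : I) (z : deleteEdge e) :
    deformation e (s, liftDeleteEdge e z) = z := by
  let τ := (coverCore e).indexAt z
  change contract e τ [] (label z.1) s (pos τ z.1) = z
  obtain h | h | h := label_ne_or_pos_of_mem_deleteEdge z.2 τ
  · rw [contract, if_neg (by simp), if_pos ⟨rfl, h⟩, edge_label_pos]
  · rw [h, contract_zero_right, geodesic, ← eq_vertex_of_pos_eq_zero h]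
  · exact ((coverCore e).mem_baseSet_at z.1 h).elim

lemma deformation_zero (a : Cover e) :
    deformation e (0, a) ∈ range (vertex : Bool → Dipole ι) ∨ a ∈ range (liftDeleteEdge e) := by
  refine (contract_zero_left e _ a.2.1 (label a.proj) _).imp_right fun h ↦ ?_
  refine ⟨⟨a.proj, ?_⟩, ?_⟩
  · rw [deleteEdge, mem_ofPred_eq, snd_eq_single_label, Pi.single_eq_of_ne h.2.symm]
  · exact congrArg (Bundle.TotalSpace.mk a.proj) (Subtype.ext h.1.symm)

lemma deformation_zero_mem_deleteEdge (a : Cover e) : deformation e (0, a) ∈ deleteEdge e := by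
  obtain ⟨τ, h⟩ | ⟨z, rfl⟩ := deformation_zero a
  · exact h ▸ vertex_mem_deleteEdge e τ
  · exact deformation_liftDeleteEdge 0 z ▸ z.2

/-- The homotopy ends in the sheets on which `deformation e` retracts everything to vertices. -/
theorem nullhomotopic_of_homotopy_to_other_sheets {T : Type*} [TopologicalSpace T]
    [PreconnectedSpace T] [Nonempty T] (h : C(T, deleteEdge e)) (H : C(I × T, Cover e))
    (h0 : ∀ c, H (0, c) = liftDeleteEdge e (h c)) (h1 : ∀ c, H (1, c) ∉ range (liftDeleteEdge e)) :
    h.Nullhomotopic := by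
  let r : C(Cover e, deleteEdge e) :=
    ⟨fun a ↦ ⟨deformation e (0, a), deformation_zero_mem_deleteEdge a⟩, by fun_prop⟩
  have hvertex (c : T) : (r (H (1, c)) : Dipole ι) ∈ range vertex :=
    (deformation_zero _).resolve_right (h1 c)
  have hconst (c c' : T) : r (H (1, c)) = r (H (1, c')) := by
    refine Subtype.ext ?_
    have himage : (range fun c ↦ (r (H (1, c)) : Dipole ι)).Subsingleton :=
      not_nontrivial_iff.1 fun hnt ↦
        (isPreconnected_range (by fun_prop)).infinite_of_nontrivial hnt
          ((finite_range vertex).subset (range_subset_iff.2 hvertex))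
    exact himage (mem_range_self c) (mem_range_self c')
  obtain ⟨c₀⟩ := ‹Nonempty T›
  refine ⟨r (H (1, c₀)), ⟨⟨r.comp H, fun c ↦ ?_, fun c ↦ hconst c c₀⟩⟩⟩
  exact Subtype.ext ((congrArg (fun a ↦ deformation e (0, a)) (h0 c)).trans
    (deformation_liftDeleteEdge 0 (h c)))

end Geodesic

end Dipole
end Cover

section Band

/-! ### The Möbius band and its punctured version as quotients -/

instance : CompactSpace Sq := isCompact_iff_compactSpace.1 (isCompact_Icc.prod isCompact_Icc)

lemma isQuotientMap_qm : Topology.IsQuotientMap qm := isQuotientMap_quot_mk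

lemma apply_eq_of_rel {Y : Type*} {g : Sq → Y}
    (hg : ∀ p q : Sq, p.1.1 = 0 → q.1.1 = 1 → p.1.2 = -q.1.2 → g p = g q) {p q : Sq}
    (h : rel p q) : g p = g q := by
  rcases h with h | ⟨hp, hq, h⟩ | ⟨hp, hq, h⟩
  · rw [Subtype.ext h]
  · exact hg p q hp hq h
  · exact (hg q p hq hp h).symm

/-- Functions on the square that are invariant under the identification and separate the points of
the Möbius band. -/
def bandInvariant (p : Sq) : ℝ × ℝ × ℝ × ℝ :=
  (p.1.1 * (1 - p.1.1), p.1.2 * (1 - 2 * p.1.1), p.1.2 * (p.1.1 * (1 - p.1.1)),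
    (1 - 2 * p.1.1) * (p.1.1 * (1 - p.1.1)))

lemma bandInvariant_eq_of_rel {p q : Sq} (h : rel p q) : bandInvariant p = bandInvariant q :=
  apply_eq_of_rel (fun p q hp hq h ↦ by simp [bandInvariant, hp, hq, h]; norm_num) h

lemma rel_of_bandInvariant_eq {p q : Sq} (h : bandInvariant p = bandInvariant q) : rel p q := by
  obtain ⟨⟨x, y⟩, hp⟩ := p
  obtain ⟨⟨x', y'⟩, hq⟩ := q
  simp only [bandInvariant, Prod.mk.injEq] at h
  obtain ⟨h1, h2, h3, h4⟩ := h
  by_cases hx : x * (1 - x) = 0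
  · have hx' : x' * (1 - x') = 0 := h1 ▸ hx
    rcases mul_eq_zero.1 hx with hx | hx <;> rcases mul_eq_zero.1 hx' with hx' | hx' <;>
      unfold rel <;> grind
  · obtain rfl : x = x' := by
      have : 1 - 2 * x = 1 - 2 * x' := mul_right_cancel₀ hx (by rw [h4, h1])
      linarith
    exact Or.inl (Prod.ext rfl (mul_right_cancel₀ hx h3))

lemma qm_eq_iff {p q : Sq} : qm p = qm q ↔ rel p q :=
  ⟨fun h ↦ rel_of_bandInvariant_eq
    (congrArg (Quot.lift bandInvariant fun _ _ ↦ bandInvariant_eq_of_rel) h), Quot.sound⟩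

instance : T2Space M := by
  let inv : M → ℝ × ℝ × ℝ × ℝ := Quot.lift bandInvariant fun _ _ ↦ bandInvariant_eq_of_rel
  have hinv : Continuous inv := isQuotientMap_qm.continuous_iff.2
    (by change Continuous bandInvariant; unfold bandInvariant; fun_prop)
  refine .of_injective_continuous (f := inv) ?_ hinv
  rintro ⟨p⟩ ⟨q⟩ h
  exact Quot.sound (rel_of_bandInvariant_eq h)

/-- The square with the open disc removed, of which `X` is a quotient. -/
abbrev PuncturedSq : Set (ℝ × ℝ) := Sq \ Bdisc

instance : CompactSpace PuncturedSq := isCompact_iff_compactSpace.1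
  ((isCompact_Icc.prod isCompact_Icc).diff Metric.isOpen_ball)

lemma fst_ne_of_dist_le {p : ℝ × ℝ} (hp : dist p (1 / 2, 0) ≤ 1 / 4) : p.1 ≠ 0 ∧ p.1 ≠ 1 := by
  have h : |p.1 - 1 / 2| ≤ 1 / 4 := (max_le_iff.1 hp).1
  constructor <;> intro h0 <;> rw [h0] at h <;> norm_num [abs_of_pos] at h

lemma fst_ne_of_mem_Bdisc {p : ℝ × ℝ} (hp : p ∈ Bdisc) : p.1 ≠ 0 ∧ p.1 ≠ 1 :=
  fst_ne_of_dist_le (Metric.mem_ball.1 hp).le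

lemma qm_mem_Xset_iff {p : Sq} : qm p ∈ Xset ↔ p.1 ∉ Bdisc := by
  refine ⟨fun h hp ↦ h ⟨p, hp, rfl⟩, ?_⟩
  rintro h ⟨q, hq, hqp⟩
  rcases qm_eq_iff.1 hqp with hqp | ⟨h0, -⟩ | ⟨h1, -⟩
  · exact h (hqp ▸ hq)
  · exact (fst_ne_of_mem_Bdisc hq).1 h0
  · exact (fst_ne_of_mem_Bdisc hq).2 h1

/-- The quotient map onto the punctured Möbius band. -/
def qX : C(PuncturedSq, X) where
  toFun p := ⟨qm ⟨p, p.2.1⟩, qm_mem_Xset_iff.2 p.2.2⟩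
  continuous_toFun := (isQuotientMap_qm.continuous.comp (by fun_prop)).subtype_mk _

lemma surjective_qX : Function.Surjective qX := by
  rintro ⟨⟨p⟩, hp⟩
  exact ⟨⟨p, p.2, qm_mem_Xset_iff.1 hp⟩, rfl⟩

lemma isQuotientMap_qX : Topology.IsQuotientMap qX :=
  .of_surjective_continuous surjective_qX qX.continuous

lemma isQuotientMap_prodMap_qX : Topology.IsQuotientMap ((ContinuousMap.id I).prodMap qX) :=
  .of_surjective_continuous (Function.surjective_id.prodMap surjective_qX) (map_continuous _)

lemma qX_eq_iff {p q : PuncturedSq} : qX p = qX q ↔ rel ⟨p, p.2.1⟩ ⟨q, q.2.1⟩ :=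
  Subtype.ext_iff.trans qm_eq_iff

lemma factorsThrough_qX_of_flip {Y : Type*} {g : PuncturedSq → Y}
    (hg : ∀ p q : PuncturedSq, p.1.1 = 0 → q.1.1 = 1 → p.1.2 = -q.1.2 → g p = g q) :
    Function.FactorsThrough g qX := fun p q h ↦ by
  rcases qX_eq_iff.1 h with h | ⟨hp, hq, h⟩ | ⟨hp, hq, h⟩
  · exact congrArg g (Subtype.ext h)
  · exact hg p q hp hq h
  · exact (hg q p hq hp h).symm

lemma qX_mem_C1_iff {p : PuncturedSq} : qX p ∈ C1 ↔ p.1.2 = 1 ∨ p.1.2 = -1 := by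
  refine ⟨?_, fun h ↦ ⟨_, rfl, h⟩⟩
  rintro ⟨q, hq, h⟩
  rcases qm_eq_iff.1 hq with hqp | ⟨-, -, hqp⟩ | ⟨-, -, hqp⟩
  · exact hqp ▸ h
  · grind
  · grind

lemma qX_mem_C2_iff {p : PuncturedSq} : qX p ∈ C2 ↔ p.1 ∈ Scirc := by
  refine ⟨?_, fun h ↦ ⟨_, rfl, h⟩⟩
  rintro ⟨q, hq, h⟩
  have hne := fst_ne_of_dist_le (Metric.mem_sphere.1 h).le
  rcases qm_eq_iff.1 hq with hqp | ⟨h0, -⟩ | ⟨h1, -⟩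
  · exact hqp ▸ h
  · exact (hne.1 h0).elim
  · exact (hne.2 h1).elim

end Band

section Push

/-! ### Pushing the punctured band onto its spine -/

/-- The norm, centred at the puncture, whose closed unit ball is the square `Sq`. -/
def frameNorm (p : ℝ × ℝ) : ℝ := max |2 * p.1 - 1| |p.2|

lemma continuous_frameNorm : Continuous frameNorm := by unfold frameNorm; fun_prop

lemma mem_Sq_iff {p : ℝ × ℝ} : p ∈ Sq ↔ frameNorm p ≤ 1 := by
  simp only [Sq, frameNorm, mem_prod, mem_Icc, max_le_iff, abs_le]
  grind

lemma dist_le_frameNorm (p : ℝ × ℝ) : dist p (1 / 2, 0) ≤ frameNorm p := by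
  simp only [frameNorm, Prod.dist_eq, Real.dist_eq]
  grind

lemma frameNorm_le_two_mul_dist (p : ℝ × ℝ) : frameNorm p ≤ 2 * dist p (1 / 2, 0) := by
  simp only [frameNorm, Prod.dist_eq, Real.dist_eq]
  grind

lemma quarter_le_dist (p : PuncturedSq) : 1 / 4 ≤ dist p.1 (1 / 2, 0) := not_lt.1 p.2.2

lemma frameNorm_pos (p : PuncturedSq) : 0 < frameNorm p := by
  linarith [quarter_le_dist p, dist_le_frameNorm p]

/-- The homothety centred at the puncture. -/
noncomputable def dilate (a : ℝ) (p : ℝ × ℝ) : ℝ × ℝ := AffineMap.homothety (1 / 2, 0) a p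

lemma frameNorm_dilate {a : ℝ} (ha : 0 ≤ a) (p : ℝ × ℝ) :
    frameNorm (dilate a p) = a * frameNorm p := by
  have h1 : 2 * (dilate a p).1 - 1 = a * (2 * p.1 - 1) := by
    simp [dilate, AffineMap.homothety_apply]; ring
  have h2 : (dilate a p).2 = a * p.2 := by simp [dilate, AffineMap.homothety_apply]
  rw [frameNorm, frameNorm, h1, h2, abs_mul, abs_mul, abs_of_nonneg ha, mul_max_of_nonneg _ _ ha]

lemma dist_dilate {a : ℝ} (ha : 0 ≤ a) (p : ℝ × ℝ) :
    dist (dilate a p) (1 / 2, 0) = a * dist p (1 / 2, 0) := by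
  rw [dilate, dist_homothety_center, Real.norm_of_nonneg ha, dist_comm]

/-- The factor of the homothety which moves a point of norm `n` linearly to norm `1`. -/
noncomputable def pushFactor (t : I) (n : ℝ) : ℝ := (1 - t) + t / n

lemma one_le_pushFactor (t : I) (p : PuncturedSq) : 1 ≤ pushFactor t (frameNorm p) := by
  have h : 1 ≤ 1 / frameNorm p := (one_le_div (frameNorm_pos p)).2 (mem_Sq_iff.1 p.2.1)
  rw [pushFactor, div_eq_mul_one_div]
  nlinarith [t.2.1]

lemma pushFactor_mul_frameNorm (t : I) (p : PuncturedSq) :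
    pushFactor t (frameNorm p) * frameNorm p = (1 - t) * frameNorm p + t := by
  rw [pushFactor, add_mul, div_mul_cancel₀ _ (frameNorm_pos p).ne']

/-- The deformation of the punctured square which pushes it radially onto its frame. -/
noncomputable def pushSq : C(I × PuncturedSq, PuncturedSq) where
  toFun z := ⟨dilate (pushFactor z.1 (frameNorm z.2)) z.2, by
    obtain ⟨t, p⟩ := z
    have h1 := one_le_pushFactor t p
    refine ⟨?_, fun h ↦ ?_⟩
    · rw [mem_Sq_iff, frameNorm_dilate (by linarith), pushFactor_mul_frameNorm]
      nlinarith [mem_Sq_iff.1 p.2.1, t.2.1, t.2.2]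
    · rw [Bdisc, Metric.mem_ball, dist_dilate (by linarith)] at h
      nlinarith [quarter_le_dist p]⟩
  continuous_toFun := by
    have hn : Continuous fun z : I × PuncturedSq ↦ frameNorm z.2 :=
      continuous_frameNorm.comp (by fun_prop)
    have hne (z : I × PuncturedSq) : frameNorm z.2 ≠ 0 := (frameNorm_pos z.2).ne'
    refine Continuous.subtype_mk ?_ _
    simp only [dilate, AffineMap.homothety_apply, pushFactor]
    fun_prop (disch := exact hne _)

lemma pushSq_zero (p : PuncturedSq) : pushSq (0, p) = p :=
  Subtype.ext (by simp [pushSq, pushFactor, dilate])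

lemma pushSq_of_frameNorm_eq_one (t : I) {p : PuncturedSq} (hp : frameNorm p = 1) :
    pushSq (t, p) = p :=
  Subtype.ext (by simp only [pushSq, ContinuousMap.coe_mk, pushFactor, hp, dilate, div_one,
    sub_add_cancel, AffineMap.homothety_one, AffineMap.id_apply])

lemma frameNorm_pushSq_one (p : PuncturedSq) : frameNorm (pushSq (1, p)) = 1 := by
  have := one_le_pushFactor 1 p
  change frameNorm (dilate (pushFactor 1 (frameNorm p)) p) = 1
  simp [frameNorm_dilate (by linarith), pushFactor_mul_frameNorm]

lemma frameNorm_eq_one_iff {p : PuncturedSq} :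
    frameNorm p = 1 ↔ p.1.1 = 0 ∨ p.1.1 = 1 ∨ p.1.2 = -1 ∨ p.1.2 = 1 := by
  have h := mem_Sq_iff.1 p.2.1
  simp only [frameNorm, max_le_iff, abs_le] at h
  simp only [le_antisymm_iff, frameNorm, max_le_iff, abs_le, le_max_iff, le_abs]
  grind

lemma factorsThrough_pushSq :
    Function.FactorsThrough (qX.comp pushSq) ((ContinuousMap.id I).prodMap qX) := by
  rintro ⟨s, p⟩ ⟨t, q⟩ h
  obtain rfl : s = t := congrArg Prod.fst h
  refine factorsThrough_qX_of_flip (g := fun p ↦ qX (pushSq (s, p))) ?_ (congrArg Prod.snd h)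
  intro p q hp hq h
  rw [pushSq_of_frameNorm_eq_one s (frameNorm_eq_one_iff.2 (by tauto)),
    pushSq_of_frameNorm_eq_one s (frameNorm_eq_one_iff.2 (by tauto))]
  exact qX_eq_iff.2 (Or.inr (Or.inl ⟨hp, hq, h⟩))

/-- The deformation of `X` induced by `pushSq`. -/
noncomputable def push : C(I × X, X) :=
  isQuotientMap_prodMap_qX.lift (qX.comp pushSq) factorsThrough_pushSq

lemma push_qX (t : I) (p : PuncturedSq) : push (t, qX p) = qX (pushSq (t, p)) :=
  DFunLike.congr_fun
    (isQuotientMap_prodMap_qX.lift_comp (qX.comp pushSq) factorsThrough_pushSq) (t, p)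

lemma push_zero (x : X) : push (0, x) = x := by
  obtain ⟨p, rfl⟩ := surjective_qX x
  rw [push_qX, pushSq_zero]

lemma exists_of_mem_C1 {x : X} (hx : x ∈ C1) :
    ∃ p : PuncturedSq, qX p = x ∧ frameNorm p = 1 ∧ (p.1.2 = -1 ∨ p.1.2 = 1) := by
  obtain ⟨p, rfl⟩ := surjective_qX x
  exact ⟨p, rfl, by grind [frameNorm_eq_one_iff, qX_mem_C1_iff]⟩

lemma push_of_mem_C1 (t : I) {x : X} (hx : x ∈ C1) : push (t, x) = x := by
  obtain ⟨p, rfl, hp, -⟩ := exists_of_mem_C1 hx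
  rw [push_qX, pushSq_of_frameNorm_eq_one t hp]

/-- A rescaled distance from the puncture, truncated at `1`. -/
noncomputable def radius : C(X, I) :=
  isQuotientMap_qX.lift
    ⟨fun p ↦ projIcc 0 1 zero_le_one (4 * dist p.1 (1 / 2, 0) - 1),
      continuous_projIcc.comp (by fun_prop)⟩
    (factorsThrough_qX_of_flip fun p q hp hq h ↦ by
      simp [Prod.dist_eq, hp, hq, h, Real.dist_eq]; norm_num [abs_of_pos])

lemma radius_qX (p : PuncturedSq) :
    radius (qX p) = projIcc 0 1 zero_le_one (4 * dist p.1 (1 / 2, 0) - 1) := by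
  rw [← ContinuousMap.comp_apply, radius, isQuotientMap_qX.lift_comp]
  rfl

lemma radius_eq_zero_iff {x : X} : radius x = 0 ↔ x ∈ C2 := by
  obtain ⟨p, rfl⟩ := surjective_qX x
  have hzero : radius (qX p) = 0 ↔ 4 * dist p.1 (1 / 2, 0) - 1 ≤ 0 := by
    rw [radius_qX]
    exact projIcc_eq_left zero_lt_one
  rw [hzero, qX_mem_C2_iff, Scirc, Metric.mem_sphere]
  grind [quarter_le_dist]

lemma radius_of_frameNorm_eq_one {p : PuncturedSq} (hp : frameNorm p = 1) :
    radius (qX p) = 1 := by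
  rw [radius_qX]
  exact projIcc_of_right_le _ (by linarith [frameNorm_le_two_mul_dist p])

lemma le_radius_push (t : I) (x : X) : t ≤ radius (push (t, x)) := by
  obtain ⟨p, rfl⟩ := surjective_qX x
  rw [push_qX, radius_qX]
  refine (projIcc_val zero_le_one t).symm.trans_le (monotone_projIcc _ ?_)
  have hd : dist (pushSq (t, p)).1 (1 / 2, 0) =
      (1 - t) * dist p.1 (1 / 2, 0) + t * (dist p.1 (1 / 2, 0) / frameNorm p) := by
    refine (dist_dilate (by linarith [one_le_pushFactor t p]) p.1).trans ?_
    rw [pushFactor]; ring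
  have hratio : 1 / 2 ≤ dist p.1 (1 / 2, 0) / frameNorm p :=
    (le_div_iff₀ (frameNorm_pos p)).2 (by linarith [frameNorm_le_two_mul_dist p])
  rw [hd]
  nlinarith [t.2.1, t.2.2, quarter_le_dist p]

end Push

section Spine

/-! ### The spine as a dipole with three edges -/

open Dipole

/-- The edges of the dipole `0`, `1`, `2` correspond to the bottom, the top and the (identified)
vertical sides of the square: on each of them the first component is the parameter `r` of the edge,
and the second one has `r * (1 - r)` as its only nonzero coordinate. -/
noncomputable def frameToDipole : C({p : PuncturedSq // frameNorm p = 1}, Dipole (Fin 3)) where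
  toFun p := ⟨(⟨(1 - (2 * p.1.1.1 - 1) * p.1.1.2) / 2, by
      have h := mem_Sq_iff.1 p.1.2.1
      have : |(2 * p.1.1.1 - 1) * p.1.1.2| ≤ 1 := by
        rw [abs_mul]
        exact mul_le_one₀ ((le_max_left _ _).trans h) (abs_nonneg _) ((le_max_right _ _).trans h)
      rw [abs_le] at this
      constructor <;> linarith⟩,
      ![p.1.1.1 * (1 - p.1.1.1) * (1 - p.1.1.2) / 2, p.1.1.1 * (1 - p.1.1.1) * (1 + p.1.1.2) / 2,
        (1 - p.1.1.2 ^ 2) / 4]), by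
    rcases frameNorm_eq_one_iff.1 p.2 with h | h | h | h
    · exact ⟨2, by ext i; fin_cases i <;> simp [h]; ring⟩
    · exact ⟨2, by ext i; fin_cases i <;> simp [h]; ring⟩
    · exact ⟨0, by ext i; fin_cases i <;> simp [h]; ring⟩
    · exact ⟨1, by ext i; fin_cases i <;> simp [h]; ring⟩⟩
  continuous_toFun := by
    refine Continuous.subtype_mk (.prodMk (by fun_prop) (continuous_pi fun i ↦ ?_)) _
    fin_cases i <;> dsimp <;> fun_prop

/-- The retraction of the punctured square onto its frame. -/
noncomputable def toFrame : C(PuncturedSq, {p : PuncturedSq // frameNorm p = 1}) where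
  toFun p := ⟨pushSq (1, p), frameNorm_pushSq_one p⟩
  continuous_toFun := by fun_prop

lemma factorsThrough_frameToDipole :
    Function.FactorsThrough (frameToDipole.comp toFrame) qX := by
  refine factorsThrough_qX_of_flip fun p q hp hq h ↦ Subtype.ext ?_
  have hp1 : pushSq (1, p) = p := pushSq_of_frameNorm_eq_one 1 (frameNorm_eq_one_iff.2 (by tauto))
  have hq1 : pushSq (1, q) = q := pushSq_of_frameNorm_eq_one 1 (frameNorm_eq_one_iff.2 (by tauto))
  simp [frameToDipole, toFrame, hp1, hq1, hp, hq, h]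
  norm_num

/-- The retraction of `X` onto its spine, with values in an abstract copy of the latter. -/
noncomputable def toSpine : C(X, Dipole (Fin 3)) :=
  isQuotientMap_qX.lift (frameToDipole.comp toFrame) factorsThrough_frameToDipole

lemma toSpine_qX (p : PuncturedSq) : toSpine (qX p) = frameToDipole (toFrame p) := by
  rw [← ContinuousMap.comp_apply, toSpine, isQuotientMap_qX.lift_comp]
  rfl

lemma not_mem_Bdisc {p : ℝ × ℝ} (hp : frameNorm p = 1) : p ∉ Bdisc := fun h ↦ by
  linarith [frameNorm_le_two_mul_dist p, Metric.mem_ball.1 h]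

/-- A point of the frame, as a point of the punctured square. -/
def framePoint (p : ℝ × ℝ) (hp : frameNorm p = 1) : PuncturedSq :=
  ⟨p, mem_Sq_iff.2 hp.le, not_mem_Bdisc hp⟩

/-- The bottom, the top and the left side of the square, so parametrized that after the
identification they all start at `(0, -1)` and end at `(0, 1)`. -/
def side (l : Fin 3) (t : ℝ) : ℝ × ℝ := ![(t, -1), (1 - t, 1), (0, 2 * t - 1)] l

lemma continuous_side (l : Fin 3) : Continuous (side l) := by
  unfold side
  fin_cases l <;> dsimp <;> fun_prop

lemma frameNorm_side (l : Fin 3) (t : I) : frameNorm (side l t) = 1 := by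
  obtain ⟨t, h0, h1⟩ := t
  fin_cases l <;> simp only [side, frameNorm] <;> simp [abs_le] <;> constructor <;> linarith

lemma frameNorm_corner {y : ℝ} (hy : |y| = 1) : frameNorm (0, y) = 1 := by
  simp [frameNorm, hy]

/-- The images in `X` of the sides of the square. -/
def sidePath (l : Fin 3) :
    Path (qX (framePoint (0, -1) (frameNorm_corner (by simp))))
      (qX (framePoint (0, 1) (frameNorm_corner (by simp)))) where
  toFun t := qX (framePoint (side l t) (frameNorm_side l t))
  continuous_toFun := qX.continuous.comp
    (((continuous_side l).comp continuous_subtype_val).subtype_mk _)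
  source' := by fin_cases l <;> simp [qX_eq_iff, rel, framePoint, side]
  target' := by fin_cases l <;> simp [qX_eq_iff, rel, framePoint, side]; norm_num

/-- The inclusion of the spine into `X`. -/
noncomputable def ofSpine : C(Dipole (Fin 3), X) := desc sidePath

lemma ofSpine_edge (l : Fin 3) (t : I) : ofSpine (edge false l t) = sidePath l t :=
  desc_edge sidePath l t

lemma exists_edge_of_frameNorm_eq_one (p : {p : PuncturedSq // frameNorm p = 1}) :
    ∃ l t, frameToDipole p = edge false l t ∧ qX p = sidePath l t := by
  obtain ⟨⟨⟨x, y⟩, ⟨hx, hy⟩, hB⟩, hp⟩ := p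
  rcases frameNorm_eq_one_iff.1 hp with rfl | rfl | rfl | rfl
  · refine ⟨2, ⟨(1 + y) / 2, by grind⟩, Dipole.ext ?_ fun i ↦ ?_, qX_eq_iff.2 (Or.inl ?_)⟩
    · simp [frameToDipole, edge]
    · fin_cases i <;> simp [frameToDipole, edge]; ring
    · simp [framePoint, side]; ring
  · refine ⟨2, ⟨(1 - y) / 2, by grind⟩, Dipole.ext ?_ fun i ↦ ?_, qX_eq_iff.2 (Or.inr (Or.inr ?_))⟩
    · simp [frameToDipole, edge]; norm_num
    · fin_cases i <;> simp [frameToDipole, edge]; ring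
    · simp [framePoint, side]; ring
  · refine ⟨0, ⟨x, hx⟩, Dipole.ext ?_ fun i ↦ ?_, congrArg qX ?_⟩
    · simp [frameToDipole, edge]
    · fin_cases i <;> simp [frameToDipole, edge]; ring
    · simp [framePoint, side]
  · refine ⟨1, ⟨1 - x, by grind⟩, Dipole.ext ?_ fun i ↦ ?_, congrArg qX ?_⟩
    · simp [frameToDipole, edge]; ring
    · fin_cases i <;> simp [frameToDipole, edge]; ring
    · simp [framePoint, side]

lemma ofSpine_toSpine (x : X) : ofSpine (toSpine x) = push (1, x) := by
  obtain ⟨p, rfl⟩ := surjective_qX x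
  obtain ⟨l, t, h, h'⟩ := exists_edge_of_frameNorm_eq_one (toFrame p)
  rw [toSpine_qX, h, ofSpine_edge, ← h', push_qX]
  rfl

lemma radius_ofSpine (z : Dipole (Fin 3)) : radius (ofSpine z) = 1 := by
  rw [← edge_label_pos false z, ofSpine_edge]
  exact radius_of_frameNorm_eq_one (frameNorm_side (label z) (pos false z))

lemma mapsTo_toSpine_C1 : MapsTo toSpine C1 (deleteEdge 2) := fun x hx ↦ by
  obtain ⟨p, rfl, hp, hp'⟩ := exists_of_mem_C1 hx
  have : pushSq (1, p) = p := pushSq_of_frameNorm_eq_one 1 hp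
  rw [toSpine_qX]
  rcases hp' with h | h <;> simp [deleteEdge, frameToDipole, toFrame, this, h]

lemma sidePath_mem_C1 {l : Fin 3} (hl : l ≠ 2) (t : I) : sidePath l t ∈ C1 := by
  refine qX_mem_C1_iff.2 ?_
  fin_cases l <;> simp [framePoint, side] at hl ⊢

lemma mapsTo_ofSpine_deleteEdge : MapsTo ofSpine (deleteEdge 2) C1 := fun z hz ↦ by
  have hends (h : pos false z = 0 ∨ pos false z = 1) (l m : Fin 3) :
      sidePath l (pos false z) = sidePath m (pos false z) := by
    rcases h with h | h <;> simp [h]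
  rw [← edge_label_pos false z, ofSpine_edge]
  rcases label_ne_or_pos_of_mem_deleteEdge hz false with h | h
  · exact sidePath_mem_C1 h _
  · rw [hends h _ 0]
    exact sidePath_mem_C1 (by decide) _

lemma C1_eq_union_range : C1 = range (sidePath 0) ∪ range (sidePath 1) := by
  refine Subset.antisymm (fun x hx ↦ ?_) (union_subset ?_ ?_)
  · obtain ⟨p, rfl, -, h | h⟩ := exists_of_mem_C1 hx
    · refine Or.inl ⟨⟨p.1.1, p.2.1.1⟩, congrArg qX (Subtype.ext ?_)⟩
      simp [framePoint, side, ← h]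
    · refine Or.inr ⟨σ ⟨p.1.1, p.2.1.1⟩, congrArg qX (Subtype.ext ?_)⟩
      simp [framePoint, side, ← h]
  · rintro _ ⟨t, rfl⟩; exact sidePath_mem_C1 (by decide) t
  · rintro _ ⟨t, rfl⟩; exact sidePath_mem_C1 (by decide) t

instance : PreconnectedSpace C1 := isPreconnected_iff_preconnectedSpace.1 <| by
  rw [C1_eq_union_range]
  exact .union _ ⟨0, (sidePath 0).source⟩ ⟨0, (sidePath 1).source⟩
    (isPreconnected_range (sidePath 0).continuous) (isPreconnected_range (sidePath 1).continuous)

instance : Nonempty C1 := ⟨⟨sidePath 0 0, sidePath_mem_C1 (by decide) 0⟩⟩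

end Spine

section Extension

/-! ### Extending maps over discs -/

variable {E Y : Type*} [NormedAddCommGroup E] [NormedSpace ℝ E] [TopologicalSpace Y]

/-- The radial projection onto a sphere from its centre. -/
noncomputable def radialProjection (c : E) {r : ℝ} (hr : 0 ≤ r) :
    C({x : E // x ≠ c}, Metric.sphere c r) where
  toFun x := ⟨c + (r / ‖x.1 - c‖) • (x.1 - c), by
    have hx : ‖x.1 - c‖ ≠ 0 := norm_ne_zero_iff.2 (sub_ne_zero.2 x.2)
    simp [norm_smul, abs_of_nonneg hr, hx]⟩
  continuous_toFun := by
    have hx (x : {x : E // x ≠ c}) : ‖x.1 - c‖ ≠ 0 := norm_ne_zero_iff.2 (sub_ne_zero.2 x.2)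
    exact Continuous.subtype_mk (by fun_prop (disch := exact hx _)) _

lemma radialProjection_coe {c : E} {r : ℝ} (hr : 0 ≤ r) (x : Metric.sphere c r)
    (hx : x.1 ≠ c) : radialProjection c hr ⟨x, hx⟩ = x := by
  have hne : ‖x.1 - c‖ ≠ 0 := norm_ne_zero_iff.2 (sub_ne_zero.2 hx)
  rw [mem_sphere_iff_norm.1 x.2] at hne
  exact Subtype.ext (by simp [radialProjection, mem_sphere_iff_norm.1 x.2, hne])

theorem exists_extension_of_nullhomotopic_sphere {c : E} {r : ℝ} (hr : 0 < r)
    {g : C(Metric.sphere c r, Y)} (hg : g.Nullhomotopic) :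
    ∃ G : C(E, Y), ∀ x : Metric.sphere c r, G x = g x := by
  classical
  obtain ⟨b, ⟨H⟩⟩ := hg
  let time (x : E) : I := projIcc 0 1 zero_le_one (2 - 2 * ‖x - c‖ / r)
  have htime : Continuous time := continuous_projIcc.comp (by fun_prop)
  let G (x : E) : Y := if h : x = c then b else H (time x, radialProjection c hr.le ⟨x, h⟩)
  have hcenter : EqOn G (fun _ ↦ b) (Metric.ball c (r / 2)) := fun x hx ↦ by
    by_cases h : x = c
    · exact dif_pos h
    have ht : time x = 1 := projIcc_of_right_le _ (by
      have : 2 * ‖x - c‖ / r ≤ 1 := (div_le_one hr).2 (by linarith [mem_ball_iff_norm.1 hx])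
      linarith)
    simp [G, h, ht]
  have hcompl : ContinuousOn G {c}ᶜ := by
    rw [continuousOn_iff_continuous_domRestrict]
    have : Continuous fun x : {x : E // x ≠ c} ↦ H (time x, radialProjection c hr.le x) := by
      fun_prop
    exact this.congr fun x ↦ (show G x.1 = _ from dif_neg x.2).symm
  have hcover : Metric.ball c (r / 2) ∪ {c}ᶜ = univ := by
    ext x
    by_cases h : x = c <;> simp [h, hr]
  have hG : Continuous G := continuousOn_univ.1 (hcover ▸
    (continuousOn_const.congr hcenter).union_of_isOpen hcompl Metric.isOpen_ball
      isOpen_compl_singleton)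
  refine ⟨⟨G, hG⟩, fun x ↦ ?_⟩
  have hx : x.1 ≠ c := Metric.ne_of_mem_sphere x.2 hr.ne'
  have ht : time x = 0 := projIcc_of_le_left _ (by
    rw [mem_sphere_iff_norm.1 x.2, mul_div_assoc, div_self hr.ne']; norm_num)
  simp [G, hx, ht, radialProjection_coe]

end Extension

section Filling

variable {Y : Type*} [TopologicalSpace Y]

lemma mem_PuncturedSq_of_mem_Scirc {p : ℝ × ℝ} (hp : p ∈ Scirc) : p ∈ PuncturedSq := by
  have hd : dist p (1 / 2, 0) = 1 / 4 := hp
  refine ⟨mem_Sq_iff.2 ?_, fun h ↦ ?_⟩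
  · linarith [frameNorm_le_two_mul_dist p]
  · exact (Metric.mem_ball.1 h).ne hd

lemma exists_extension_of_nullhomotopic_Scirc (φ : C(PuncturedSq, Y))
    (hφ : (φ.comp ⟨inclusion fun _ ↦ mem_PuncturedSq_of_mem_Scirc, by fun_prop⟩).Nullhomotopic) :
    ∃ g : C(Sq, Y), ∀ p : PuncturedSq, g ⟨p, p.2.1⟩ = φ p := by
  classical
  obtain ⟨G, hG⟩ := exists_extension_of_nullhomotopic_sphere (by norm_num : (0 : ℝ) < 1 / 4) hφ
  let g (p : Sq) : Y := if hp : p.1 ∈ Bdisc then G p else φ ⟨p, p.2, hp⟩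
  have hout (p : PuncturedSq) : g ⟨p, p.2.1⟩ = φ p := dif_neg p.2.2
  have hin : EqOn g (fun p ↦ G p) {p | p.1 ∈ Metric.closedBall (1 / 2, 0) (1 / 4)} := by
    intro p hp
    rcases (Metric.mem_closedBall.1 hp).lt_or_eq with hlt | heq
    · exact dif_pos hlt
    · exact (hout ⟨p, mem_PuncturedSq_of_mem_Scirc heq⟩).trans (hG ⟨p, heq⟩).symm
  have hcover :
      {p : Sq | p.1 ∉ Bdisc} ∪ {p | p.1 ∈ Metric.closedBall (1 / 2, 0) (1 / 4)} = univ :=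
    eq_univ_of_forall fun p ↦ or_iff_not_imp_left.2 fun hp ↦
      Metric.ball_subset_closedBall (not_not.1 hp)
  have hg : ContinuousOn g univ := by
    rw [← hcover]
    refine ContinuousOn.union_of_isClosed ?_ (ContinuousOn.congr (by fun_prop) hin)
      (Metric.isOpen_ball.isClosed_compl.preimage continuous_subtype_val)
      (Metric.isClosed_closedBall.preimage continuous_subtype_val)
    rw [continuousOn_iff_continuous_domRestrict]
    have : Continuous fun p : {p : Sq | p.1 ∉ Bdisc} ↦ φ ⟨p, p.1.2, p.2⟩ := by fun_prop
    exact this.congr fun p ↦ (hout ⟨p, p.1.2, p.2⟩).symm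
  exact ⟨⟨g, continuousOn_univ.1 hg⟩, hout⟩

lemma exists_extension_of_nullhomotopic_C2 (φ : C(X, Y)) (hφ : (φ.restrict C2).Nullhomotopic) :
    ∃ h : C(M, Y), ∀ x : X, h x = φ x := by
  let circle : C(Scirc, C2) :=
    ⟨fun p ↦ ⟨qX ⟨p, mem_PuncturedSq_of_mem_Scirc p.2⟩, qX_mem_C2_iff.2 p.2⟩, by fun_prop⟩
  obtain ⟨g, hg⟩ := exists_extension_of_nullhomotopic_Scirc (φ.comp qX) (hφ.comp_left circle)
  have hrel {p q : Sq} (h : rel p q) : g p = g q := apply_eq_of_rel (fun p q hp hq h ↦ by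
    have hp' : p.1 ∉ Bdisc := fun h ↦ (fst_ne_of_mem_Bdisc h).1 hp
    have hq' : q.1 ∉ Bdisc := fun h ↦ (fst_ne_of_mem_Bdisc h).2 hq
    exact (hg ⟨p, p.2, hp'⟩).trans <|
      (congrArg φ (qX_eq_iff.2 (Or.inr (Or.inl ⟨hp, hq, h⟩)))).trans (hg ⟨q, q.2, hq'⟩).symm) h
  refine ⟨⟨Quot.lift g fun _ _ ↦ hrel, isQuotientMap_qm.continuous_iff.2 g.continuous⟩, fun x ↦ ?_⟩
  obtain ⟨p, rfl⟩ := surjective_qX x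
  exact hg p

end Filling

section Collar

/-! ### The Möbius band as a twisted collar of its boundary -/

lemma isQuotientMap_prodMap_qm : Topology.IsQuotientMap (Prod.map (id : I → I) qm) :=
  .of_surjective_continuous (Function.surjective_id.prodMap Quot.mk_surjective)
    (continuous_id.prodMap isQuotientMap_qm.continuous)

/-- The map of the square which rescales the second coordinate by `1 - 2 * t`. -/
def shrinkSq : C(I × Sq, Sq) where
  toFun z := ⟨(z.2.1.1, (1 - 2 * z.1) * z.2.1.2), z.2.2.1, by
    obtain ⟨⟨t, h0, h1⟩, ⟨⟨x, y⟩, -, hy⟩⟩ := z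
    simp only [mem_Icc, ← abs_le] at hy ⊢
    rw [abs_mul]
    exact mul_le_one₀ (abs_le.2 ⟨by linarith, by linarith⟩) (abs_nonneg _) hy⟩
  continuous_toFun := by fun_prop

lemma qm_shrinkSq_eq_of_rel (t : I) {p q : Sq} (h : rel p q) :
    qm (shrinkSq (t, p)) = qm (shrinkSq (t, q)) :=
  apply_eq_of_rel (g := fun p ↦ qm (shrinkSq (t, p)))
    (fun p q hp hq h ↦ qm_eq_iff.2 (Or.inr (Or.inl ⟨hp, hq, by simp [shrinkSq, h]⟩))) h

/-- The homotopy which slides every boundary point of the Möbius band along its fibre, through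
the core circle, to the opposite boundary point. -/
def shrink : C(I × M, M) where
  toFun z := Quot.lift (fun p ↦ qm (shrinkSq (z.1, p))) (fun _ _ ↦ qm_shrinkSq_eq_of_rel z.1) z.2
  continuous_toFun := isQuotientMap_prodMap_qm.continuous_iff.2
    (isQuotientMap_qm.continuous.comp shrinkSq.continuous)

lemma qm_mem_Xset_of_snd {p : Sq} (hp : p.1.2 = 1 ∨ p.1.2 = -1) : qm p ∈ Xset :=
  qm_mem_Xset_iff.2 <| not_mem_Bdisc <| le_antisymm (mem_Sq_iff.1 p.2) <| by
    rcases hp with h | h <;> simp [frameNorm, h]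

/-- A point of the horizontal sides of the square, as a point of the outer boundary circle. -/
def mkC1 (p : Sq) (hp : p.1.2 = 1 ∨ p.1.2 = -1) : C1 := ⟨⟨qm p, qm_mem_Xset_of_snd hp⟩, p, rfl, hp⟩

lemma mkC1_eq_iff {p q : Sq} {hp hq} : mkC1 p hp = mkC1 q hq ↔ rel p q :=
  Subtype.ext_iff.trans (Subtype.ext_iff.trans qm_eq_iff)

lemma exists_mkC1_eq (c : C1) : ∃ p hp, mkC1 p hp = c := by
  obtain ⟨c, p, hpc, hp⟩ := c
  exact ⟨p, hp, Subtype.ext (Subtype.ext hpc)⟩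

lemma snd_shrinkSq_one {p : Sq} (hp : p.1.2 = 1 ∨ p.1.2 = -1) :
    (shrinkSq (1, p)).1.2 = 1 ∨ (shrinkSq (1, p)).1.2 = -1 := by
  rcases hp with h | h <;> norm_num [shrinkSq, h]

lemma exists_shrink_one_eq (c : C1) : ∃ c' : C1, shrink (1, c) = c' := by
  obtain ⟨p, hp, rfl⟩ := exists_mkC1_eq c
  exact ⟨mkC1 _ (snd_shrinkSq_one hp), rfl⟩

/-- The fibrewise antipode on the boundary circle of the Möbius band. -/
def flip : C(C1, C1) where
  toFun c := ⟨⟨shrink (1, c), by obtain ⟨c', h⟩ := exists_shrink_one_eq c; exact h ▸ c'.1.2⟩,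
    by obtain ⟨c', h⟩ := exists_shrink_one_eq c; simp only [h]; exact c'.2⟩
  continuous_toFun := by fun_prop

lemma flip_mkC1 (p : Sq) (hp : p.1.2 = 1 ∨ p.1.2 = -1) :
    flip (mkC1 p hp) = mkC1 (shrinkSq (1, p)) (snd_shrinkSq_one hp) := rfl

/-- The fibres of the Möbius band, parametrized from their boundary points. Every fibre occurs
twice, once from each end. -/
def collar : C(I × C1, M) where
  toFun z := shrink (z.1, z.2)
  continuous_toFun := by fun_prop

lemma collar_mkC1 (t : I) (p : Sq) (hp : p.1.2 = 1 ∨ p.1.2 = -1) :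
    collar (t, mkC1 p hp) = qm (shrinkSq (t, p)) := rfl

lemma collar_zero (c : C1) : collar (0, c) = c := by
  obtain ⟨p, hp, rfl⟩ := exists_mkC1_eq c
  exact congrArg qm (Subtype.ext (Prod.ext rfl (by simp [shrinkSq])))

lemma flip_flip (c : C1) : flip (flip c) = c := by
  obtain ⟨p, hp, rfl⟩ := exists_mkC1_eq c
  rw [flip_mkC1, flip_mkC1, mkC1_eq_iff]
  exact Or.inl (Prod.ext rfl (by norm_num [shrinkSq]))

lemma collar_symm_flip (t : I) (c : C1) : collar (σ t, flip c) = collar (t, c) := by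
  obtain ⟨p, hp, rfl⟩ := exists_mkC1_eq c
  rw [flip_mkC1, collar_mkC1, collar_mkC1, qm_eq_iff]
  exact Or.inl (Prod.ext rfl (by simp [shrinkSq]; ring))

lemma eq_or_eq_symm_flip_of_collar_eq {t t' : I} {c c' : C1}
    (h : collar (t, c) = collar (t', c')) :
    t' = t ∧ c' = c ∨ t' = σ t ∧ c' = flip c := by
  obtain ⟨p, hp, rfl⟩ := exists_mkC1_eq c
  obtain ⟨q, hq, rfl⟩ := exists_mkC1_eq c'
  rw [collar_mkC1, collar_mkC1, qm_eq_iff] at h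
  rw [flip_mkC1, mkC1_eq_iff, mkC1_eq_iff, Subtype.ext_iff, Subtype.ext_iff]
  simp only [rel, shrinkSq, ContinuousMap.coe_mk, Prod.ext_iff, unitInterval.coe_symm_eq,
    Icc.coe_one] at h ⊢
  grind

lemma surjective_collar : Function.Surjective collar := by
  rintro ⟨⟨x, y⟩, hx, hy⟩
  refine ⟨(⟨(1 - y) / 2, by grind⟩, mkC1 ⟨(x, 1), hx, by simp⟩ (Or.inl rfl)),
    congrArg qm (Subtype.ext (Prod.ext rfl ?_))⟩
  simp [shrinkSq]; ring

instance : CompactSpace C1 := isCompact_iff_compactSpace.1 <| by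
  rw [C1_eq_union_range]
  exact (isCompact_range (sidePath 0).continuous).union (isCompact_range (sidePath 1).continuous)

lemma isQuotientMap_collar : Topology.IsQuotientMap collar :=
  .of_surjective_continuous surjective_collar collar.continuous

end Collar

section BandLift

/-! ### Lifting maps of the Möbius band to covering spaces -/

variable {A Y : Type*} [TopologicalSpace A] [TopologicalSpace Y] {p : A → Y}

lemma exists_lift_of_collar_lift (cov : IsCoveringMap p) (h : C(M, Y)) (H : C(I × C1, A))
    (hH : p ∘ H = h ∘ collar) {c₀ : C1} (hc₀ : H (1, c₀) = H (0, flip c₀)) :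
    ∃ k : C(M, A), (∀ m, p (k m) = h m) ∧ ∀ c : C1, k c = H (0, c) := by
  have hend : (fun c ↦ H (1, c)) = fun c ↦ H (0, flip c) := by
    refine cov.eq_of_comp_eq (by fun_prop) (by fun_prop) (funext fun c ↦ ?_) c₀ hc₀
    exact (congrFun hH (1, c)).trans
      ((congrFun hH (0, flip c)).trans (congrArg h (collar_zero _))).symm
  have hsymm (t : I) (c : C1) : H (σ t, flip c) = H (t, c) := by
    refine congrFun (cov.eq_of_comp_eq (g₁ := fun t ↦ H (σ t, flip c)) (g₂ := fun t ↦ H (t, c))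
      (by fun_prop) (by fun_prop) (funext fun t ↦ ?_) 0 ?_) t
    · exact (congrFun hH _).trans
        ((congrArg h (collar_symm_flip t c)).trans (congrFun hH (t, c)).symm)
    · simpa only [unitInterval.symm_zero, flip_flip] using congrFun hend (flip c)
  have hfactor : Function.FactorsThrough H collar := by
    rintro ⟨t, c⟩ ⟨t', c'⟩ htc
    obtain ⟨rfl, rfl⟩ | ⟨rfl, rfl⟩ := eq_or_eq_symm_flip_of_collar_eq htc
    · rfl
    · exact (hsymm t c).symm
  have hlift (z : I × C1) : isQuotientMap_collar.lift H hfactor (collar z) = H z :=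
    DFunLike.congr_fun (isQuotientMap_collar.lift_comp H hfactor) z
  refine ⟨isQuotientMap_collar.lift H hfactor, fun m ↦ ?_, fun c ↦ ?_⟩
  · obtain ⟨z, rfl⟩ := surjective_collar m
    rw [hlift]
    exact congrFun hH z
  · rw [← collar_zero, hlift]

lemma exists_lift_or_homotopy_to_other_sheets (cov : IsCoveringMap p) (h : C(M, Y)) (s : C(C1, A))
    (hs : ∀ c : C1, p (s c) = h c) :
    (∃ k : C(M, A), (∀ m, p (k m) = h m) ∧ ∀ c : C1, k c = s c) ∨
      ∃ H : C(I × C1, A), (∀ c, H (0, c) = s c) ∧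
        ∀ c, p (H (1, c)) = h (flip c) ∧ H (1, c) ≠ s (flip c) := by
  have h0 (c : C1) : h.comp collar (0, c) = p (s c) :=
    (congrArg h (collar_zero c)).trans (hs c).symm
  have hzero := cov.liftHomotopy_zero (h.comp collar) s h0
  have hlifts := cov.liftHomotopy_lifts (h.comp collar) s h0
  set H := cov.liftHomotopy (h.comp collar) s h0
  by_cases hc : ∃ c, H (1, c) = s (flip c)
  · obtain ⟨c₀, hc₀⟩ := hc
    rw [← hzero] at hc₀
    simpa only [hzero] using Or.inl (exists_lift_of_collar_lift cov h H hlifts hc₀)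
  · exact .inr ⟨H, hzero, fun c ↦ ⟨congrFun hlifts (1, c), fun heq ↦ hc ⟨c, heq⟩⟩⟩

end BandLift

section Lift

/-! ### Maps which are inessential on the inner boundary circle -/

open Dipole

lemma nullhomotopic_of_toSpine {T : Type*} [TopologicalSpace T] {k : C(T, C1)}
    {s : C(T, deleteEdge (2 : Fin 3))} (hs : ∀ x, (s x : Dipole (Fin 3)) = toSpine (k x))
    (hnull : s.Nullhomotopic) : k.Nullhomotopic := by
  let r : C(deleteEdge (2 : Fin 3), C1) := ⟨mapsTo_ofSpine_deleteEdge.restrict, by fun_prop⟩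
  have hr : r.comp s = k := ContinuousMap.ext fun x ↦ Subtype.ext <| by
    exact (congrArg ofSpine (hs x)).trans ((ofSpine_toSpine _).trans (push_of_mem_C1 1 (k x).2))
  exact hr ▸ hnull.comp_right r

lemma exists_lift_toSpine {f : C(X, X)} (h11 : MapsTo f C1 C1)
    (he1 : Essential (restrictMap f h11)) (h2 : (f.restrict C2).Nullhomotopic) :
    ∃ F : C(X, Cover (2 : Fin 3)), (∀ x, (F x).proj = toSpine (f x)) ∧
      ∀ x ∈ C1, F x ∈ range (liftDeleteEdge 2) := by
  let s : C(C1, deleteEdge (2 : Fin 3)) :=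
    ⟨fun c ↦ ⟨toSpine (f c), mapsTo_toSpine_C1 (h11 c.2)⟩, by fun_prop⟩
  obtain ⟨h, hh⟩ := exists_extension_of_nullhomotopic_C2 (toSpine.comp f) (h2.comp_right toSpine)
  obtain ⟨k, hk, hks⟩ | ⟨H, hH0, hH1⟩ := exists_lift_or_homotopy_to_other_sheets
    (isCoveringMap_proj 2) h ((liftDeleteEdge 2).comp s) fun c ↦ (hh c).symm
  · exact ⟨k.comp ⟨Subtype.val, continuous_subtype_val⟩, fun x ↦ (hk x).trans (hh x),
      fun x hx ↦ ⟨s ⟨x, hx⟩, (hks ⟨x, hx⟩).symm⟩⟩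
  · refine (he1 (nullhomotopic_of_toSpine (fun _ ↦ rfl)
      (nullhomotopic_of_homotopy_to_other_sheets s H hH0 ?_))).elim
    rintro c ⟨z, hz⟩
    have hproj : z = s (flip c) := Subtype.ext <|
      (congrArg (coverCore 2).proj hz).trans ((hH1 c).1.trans (hh (flip c)))
    exact (hH1 c).2 (hz.symm.trans (congrArg (liftDeleteEdge 2) hproj))

end Lift

section Sweep

open Dipole

/-- The homotopy obtained by composing `f` with the retraction of `X` onto its spine. -/
noncomputable def pushHomotopy (f : C(X, X)) : f.Homotopy (ofSpine.comp (toSpine.comp f)) where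
  toFun z := push (z.1, f z.2)
  map_zero_left x := push_zero (f x)
  map_one_left x := (ofSpine_toSpine (f x)).symm

/-- The homotopy inside the spine which deforms a map that lifts to the covering into the outer
boundary circle. -/
noncomputable def spineHomotopy {u : C(X, Dipole (Fin 3))} (F : C(X, Cover (2 : Fin 3)))
    (hF : ∀ x, (F x).proj = u x) :
    (ofSpine.comp u).Homotopy
      (ofSpine.comp ((deformation 2).comp ((ContinuousMap.const X 0).prodMk F))) where
  toFun z := ofSpine (deformation 2 (σ z.1, F z.2))
  map_zero_left x := by
    simp only [unitInterval.symm_zero, deformation_one, hF, ContinuousMap.comp_apply]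
  map_one_left x := by rw [unitInterval.symm_one]; rfl

lemma exists_homotopy_into_C1 {f : C(X, X)} (h11 : MapsTo f C1 C1) (F : C(X, Cover (2 : Fin 3)))
    (hF : ∀ x, (F x).proj = toSpine (f x)) (hF1 : ∀ x ∈ C1, F x ∈ range (liftDeleteEdge 2)) :
    ∃ (k : C(X, X)) (L : f.Homotopy k), (∀ x, k x ∈ C1) ∧ (∀ t, ∀ x ∈ C1, L (t, x) ∈ C1) ∧
      ∀ t x, 0 < t → t < 1 → t < radius (L (t, x)) := by
  refine ⟨_, (pushHomotopy f).trans (spineHomotopy F hF),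
    fun x ↦ mapsTo_ofSpine_deleteEdge (deformation_zero_mem_deleteEdge (F x)), ?_, ?_⟩
  · intro t x hx
    rw [ContinuousMap.Homotopy.trans_apply]
    split_ifs
    · exact (push_of_mem_C1 _ (h11 hx)).symm ▸ h11 hx
    · obtain ⟨z, hz⟩ := hF1 x hx
      refine mapsTo_ofSpine_deleteEdge ?_
      rw [← hz, deformation_liftDeleteEdge]
      exact z.2
  · intro t x h0 h1
    rw [ContinuousMap.Homotopy.trans_apply]
    split_ifs
    · refine lt_of_lt_of_le ?_ (le_radius_push _ _)
      exact Subtype.coe_lt_coe.1 (lt_two_mul_self (Subtype.coe_lt_coe.2 h0))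
    · exact h1.trans_eq (radius_ofSpine _).symm

/-- Stop the homotopy `L` at the time `radius x`: a fixed point of the resulting map off the
boundary would have `radius x = radius (L (radius x, x)) > radius x`. -/
lemma exists_boundaryHomotopic_of_lt_radius {f k : C(X, X)} (hf : BoundaryPreserving f)
    (L : f.Homotopy k) (hk : ∀ x, k x ∈ Bd) (hL : ∀ t, ∀ x ∈ C1, L (t, x) ∈ Bd)
    (hlt : ∀ t x, 0 < t → t < 1 → t < radius (L (t, x))) :
    ∃ g : C(X, X), BoundaryHomotopic f g ∧ ∀ x, g x = x → x ∈ Bd := by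
  let g : C(X, X) := ⟨fun x ↦ L (radius x, x), by fun_prop⟩
  let H : f.Homotopy g :=
    { toFun z := L (min z.1 (radius z.2), z.2)
      map_zero_left x := by simp
      map_one_left x := congrArg (fun t ↦ L (t, x)) (min_eq_right unitInterval.le_one') }
  refine ⟨g, ⟨H, fun x hx t ↦ ?_⟩, fun x hx ↦ ?_⟩
  · obtain h1 | h2 := hx
    · exact hL _ x h1
    · change L (min t (radius x), x) ∈ Bd
      rw [radius_eq_zero_iff.2 h2, min_eq_right unitInterval.nonneg', L.apply_zero]
      exact hf (.inr h2)
  · obtain h0 | h0 := (unitInterval.nonneg' (t := radius x)).eq_or_lt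
    · exact .inr (radius_eq_zero_iff.1 h0.symm)
    obtain h1 | h1 := (unitInterval.le_one' (t := radius x)).eq_or_lt
    · have hkx : k x = x := (L.apply_one x).symm.trans (h1 ▸ hx)
      exact hkx ▸ hk x
    · exact absurd (congrArg radius hx) (hlt _ x h0 h1).ne'

end Sweep

/-- A boundary semi-essential map of the punctured Möbius band with `f(C₁) ⊆ C₁`,
`f|C₁` essential and `f|C₂` inessential is boundary-homotopic to a map all of whose
fixed points lie on the boundary. -/
theorem stmt_10 (f : C(X, X)) (hf : BoundaryPreserving f)
    (h11 : MapsTo f C1 C1) (he1 : Essential (restrictMap f h11))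
    (h2 : Inessential (restrictMap f (hf.mono_left Set.subset_union_right : MapsTo f C2 Bd))) :
    ∃ g : C(X, X), BoundaryHomotopic f g ∧ ∀ x : X, g x = x → x ∈ Bd := by
  have hnull : (f.restrict C2).Nullhomotopic :=
    ContinuousMap.Nullhomotopic.comp_right h2 ⟨Subtype.val, continuous_subtype_val⟩
  obtain ⟨F, hF, hF1⟩ := exists_lift_toSpine h11 he1 hnull
  obtain ⟨k, L, hk, hL, hlt⟩ := exists_homotopy_into_C1 h11 F hF hF1
  exact exists_boundaryHomotopic_of_lt_radius hf L (fun x ↦ .inl (hk x))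
    (fun t x hx ↦ .inl (hL t x hx)) hlt

end PMB
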